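/- Let c ∈ ℂ with c ≠ 0, and let (q1,p1,q2,p2) be a rational solution of A5^(2)(α0,α1,α2,α3) such that p1 and p2 both have a pole at c while q1 and q2 have no pole at c. Then p1 and p2 have simple poles at c; writing b for the residue of p1 at c and d for the residue of p2 at c, one has: 16·b·d + c = 0; q1(c) = −4d; q2(c) = −4b; the limit as t → c of p1(t) − b/(t−c) equals 3/8 + 2b²/c; the limit as t → c of p2(t) − d/(t−c) equals 3/8 + 2d²/c; and q1'(c)·b + q2'(c)·d + (α0+α1+α3)/2 = 1/2, where q1'(c), q2'(c) denote the derivatives of q1, q2 at c. -/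

import Mathlib

open Filter Topology Polynomial

/-- Evaluation of a rational function with complex coefficients at a point,
using its reduced numerator and denominator. -/
noncomputable def evR (f : RatFunc ℂ) (t : ℂ) : ℂ := f.num.eval t / f.denom.eval t

/-- A rational function has no pole at `c` if its reduced denominator does not vanish at `c`. -/
def NoPoleAt (f : RatFunc ℂ) (c : ℂ) : Prop := f.denom.eval c ≠ 0

/-- `(q1, p1, q2, p2)` is a rational solution of the Sasano system
`A5^(2)(α0, α1, α2, α3)` (the parameter `α2` does not occur in the equations):
the four differential equations hold at every point `t ∈ ℂ` which is not a pole
of any of `q1, p1, q2, p2`. -/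
def IsSasanoSol (a0 a1 a3 : ℂ) (q1 p1 q2 p2 : RatFunc ℂ) : Prop :=
  ∀ t : ℂ, NoPoleAt q1 t → NoPoleAt p1 t → NoPoleAt q2 t → NoPoleAt p2 t →
    (t * deriv (evR q1) t =
      2 * (evR q1 t) ^ 2 * evR p1 t - (evR q1 t) ^ 2 + (a0 + a1 + a3) * evR q1 t
        - t + 4 * t * evR p2 t + 2 * evR q1 t * evR q2 t * evR p2 t) ∧
    (t * deriv (evR p1) t =
      -2 * evR q1 t * (evR p1 t) ^ 2 + 2 * evR q1 t * evR p1 t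
        - (a0 + a1 + a3) * evR p1 t + a0 - 2 * evR p1 t * evR q2 t * evR p2 t) ∧
    (t * deriv (evR q2) t =
      2 * (evR q2 t) ^ 2 * evR p2 t - (evR q2 t) ^ 2 + (a0 + a1 + a3) * evR q2 t
        - t + 4 * t * evR p1 t + 2 * evR q1 t * evR p1 t * evR q2 t) ∧
    (t * deriv (evR p2) t =
      -2 * evR q2 t * (evR p2 t) ^ 2 + 2 * evR q2 t * evR p2 t
        - (a0 + a1 + a3) * evR p2 t + a1 - 2 * evR q1 t * evR p1 t * evR p2 t)

/-!
With `H = q1 * p1 + q2 * p2` and `A = α0 + α1 + α3`, the equations read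

  `2 H = 2 q1 - A + a0 / p1 - t p1' / p1`,  `4 t p2 = t q1' - 2 q1 H + q1² - A q1 + t`,

and likewise with the two pairs exchanged. By the first one, `H` has at most a simple pole at `c`,
as `p1' / p1` does and `a0 / p1` tends to `0`; by the second one, so does `p2`, and by symmetry
`p1`. Comparing residues and constant terms in these equations and in the definition of `H` gives
all the asserted relations.
-/

section PolarExpansion

variable {𝕜 : Type*} [NontriviallyNormedField 𝕜] {f f₁ f₂ g : 𝕜 → 𝕜} {c g' r r₁ r₂ a a₁ a₂ : 𝕜}

/-- `f t = r / (t - c) + a + o(1)` as `t → c`, `t ≠ c`: the Laurent expansion of `f` at an at most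
simple pole, up to the constant term. The residue `r` is allowed to be `0`. -/
def HasPolarExpansionAt (f : 𝕜 → 𝕜) (c r a : 𝕜) : Prop :=
  Tendsto (fun t => f t - r / (t - c)) (𝓝[≠] c) (𝓝 a)

namespace HasPolarExpansionAt

theorem of_tendsto (hf : Tendsto f (𝓝[≠] c) (𝓝 a)) : HasPolarExpansionAt f c 0 a := by
  simpa only [HasPolarExpansionAt, zero_div, sub_zero] using hf

theorem congr (hf : HasPolarExpansionAt f₁ c r a) (h : f₁ =ᶠ[𝓝[≠] c] f₂) :
    HasPolarExpansionAt f₂ c r a :=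
  Tendsto.congr' (h.mono fun t ht => by rw [ht]) hf

theorem add (h₁ : HasPolarExpansionAt f₁ c r₁ a₁) (h₂ : HasPolarExpansionAt f₂ c r₂ a₂) :
    HasPolarExpansionAt (fun t => f₁ t + f₂ t) c (r₁ + r₂) (a₁ + a₂) :=
  (Tendsto.add h₁ h₂).congr fun t => by ring

theorem mul_left (hg : HasDerivAt g g' c) (hf : HasPolarExpansionAt f c r a) :
    HasPolarExpansionAt (fun t => g t * f t) c (g c * r) (g c * a + g' * r) := by
  have hcont : Tendsto g (𝓝[≠] c) (𝓝 (g c)) := hg.continuousAt.tendsto.mono_left inf_le_left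
  refine ((hcont.mul hf).add (hg.tendsto_slope.mul_const r)).congr fun t => ?_
  rw [slope_def_field]
  ring

theorem tendsto_sub_mul (hf : HasPolarExpansionAt f c r a) :
    Tendsto (fun t => (t - c) * f t) (𝓝[≠] c) (𝓝 r) := by
  have hsub : Tendsto (fun t => t - c) (𝓝[≠] c) (𝓝 0) :=
    tendsto_sub_nhds_zero_iff.2 (tendsto_id.mono_left inf_le_left)
  have hlim := (hsub.mul hf).add_const r
  rw [zero_mul, zero_add] at hlim
  refine hlim.congr' ?_
  filter_upwards [self_mem_nhdsWithin] with t ht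
  have : t - c ≠ 0 := sub_ne_zero.2 ht
  field_simp
  ring

theorem unique (h₁ : HasPolarExpansionAt f c r₁ a₁) (h₂ : HasPolarExpansionAt f c r₂ a₂) :
    r₁ = r₂ ∧ a₁ = a₂ := by
  obtain rfl : r₁ = r₂ := tendsto_nhds_unique h₁.tendsto_sub_mul h₂.tendsto_sub_mul
  exact ⟨rfl, tendsto_nhds_unique h₁ h₂⟩

theorem of_eventuallyEq_zpow_neg_one_mul (hg : HasDerivAt g g' c)
    (hf : ∀ᶠ t in 𝓝[≠] c, f t = (t - c) ^ (-1 : ℤ) * g t) :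
    HasPolarExpansionAt f c (g c) g' := by
  refine hg.tendsto_slope.congr' ?_
  filter_upwards [hf] with t ht
  rw [ht, slope_def_field, zpow_neg_one]
  ring

theorem logDeriv_of_eventuallyEq_zpow_mul [CompleteSpace 𝕜] {n : ℤ} (hg : AnalyticAt 𝕜 g c)
    (hgc : g c ≠ 0) (hf : ∀ᶠ t in 𝓝[≠] c, f t = (t - c) ^ n * g t) :
    HasPolarExpansionAt (logDeriv f) c n (deriv g c / g c) := by
  have hlim : Tendsto (logDeriv g) (𝓝[≠] c) (𝓝 (deriv g c / g c)) :=
    (hg.deriv.div hg hgc).continuousAt.tendsto.mono_left inf_le_left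
  refine hlim.congr' ?_
  have hg_near : ∀ᶠ t in 𝓝[≠] c, AnalyticAt 𝕜 g t ∧ g t ≠ 0 :=
    (hg.eventually_analyticAt.and (hg.continuousAt.eventually_ne hgc)).filter_mono inf_le_left
  filter_upwards [logDeriv_congr_nhdsNE hf, hg_near, self_mem_nhdsWithin] with t ht hgt htc
  have htc : t - c ≠ 0 := sub_ne_zero.2 htc
  have hdiff : DifferentiableAt 𝕜 (fun z => z - c) t := by fun_prop
  have hpow : logDeriv (fun z => (z - c) ^ n) t = n / (t - c) := by
    rw [logDeriv_fun_zpow hdiff, logDeriv_apply, deriv_sub_const_fun, deriv_id'']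
    ring
  rw [ht, logDeriv_mul (f := fun z => (z - c) ^ n) t (zpow_ne_zero n htc) hgt.2
    (hdiff.zpow (Or.inl htc)) hgt.1.differentiableAt, hpow, add_sub_cancel_left]

theorem meromorphicOrderAt_eq_neg_one (hf : HasPolarExpansionAt f c r a)
    (hpole : meromorphicOrderAt f c < 0) : meromorphicOrderAt f c = -1 := by
  have hmer : MeromorphicAt f c := meromorphicAt_of_meromorphicOrderAt_ne_zero hpole.ne
  have hid : MeromorphicAt (fun t => t - c) c := by fun_prop
  have hnonneg : 0 ≤ meromorphicOrderAt ((fun t => t - c) * f) c :=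
    (tendsto_nhds_iff_meromorphicOrderAt_nonneg (hid.mul hmer)).1 ⟨r, hf.tendsto_sub_mul⟩
  have hone : meromorphicOrderAt (fun t => t - c) c = (1 : ℤ) :=
    (meromorphicOrderAt_eq_int_iff hid).2
      ⟨fun _ => 1, analyticAt_const, one_ne_zero, by simp⟩
  rw [meromorphicOrderAt_mul hid hmer, hone] at hnonneg
  obtain ⟨n, hn⟩ := WithTop.ne_top_iff_exists.1 hpole.ne_top
  rw [← hn] at hpole hnonneg ⊢
  norm_cast at hpole hnonneg
  obtain rfl : n = -1 := by lia
  rfl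

end HasPolarExpansionAt

theorem exists_hasPolarExpansionAt_logDeriv [CompleteSpace 𝕜] {n : ℤ}
    (hf : MeromorphicAt f c) (hn : meromorphicOrderAt f c = n) :
    ∃ l, HasPolarExpansionAt (logDeriv f) c n l := by
  obtain ⟨g, hg, hgc, hfg⟩ := (meromorphicOrderAt_eq_int_iff hf).1 hn
  exact ⟨_, .logDeriv_of_eventuallyEq_zpow_mul hg hgc hfg⟩

theorem exists_hasPolarExpansionAt_of_meromorphicOrderAt_eq_neg_one [CompleteSpace 𝕜]
    (hf : meromorphicOrderAt f c = -1) :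
    ∃ r a, r ≠ 0 ∧ HasPolarExpansionAt f c r a ∧
      HasPolarExpansionAt (logDeriv f) c (-1) (a / r) := by
  have hmer : MeromorphicAt f c :=
    meromorphicAt_of_meromorphicOrderAt_ne_zero (by rw [hf]; decide)
  obtain ⟨g, hg, hgc, hfg⟩ := (meromorphicOrderAt_eq_int_iff (n := -1) hmer).1 hf
  refine ⟨g c, deriv g c, hgc, ?_, ?_⟩
  · exact .of_eventuallyEq_zpow_neg_one_mul hg.differentiableAt.hasDerivAt hfg
  · simpa only [Int.cast_neg, Int.cast_one] using
      HasPolarExpansionAt.logDeriv_of_eventuallyEq_zpow_mul hg hgc hfg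

end PolarExpansion

/-- The equations at time `t` for one conjugate pair `(q, p)` of the Sasano system, in which `s` is
the momentum of the other pair, `H = q1 * p1 + q2 * p2`, `A = α0 + α1 + α3`, and `a` is `α0` or
`α1`. Written with `H`, the two halves of the system differ only in these arguments. -/
structure SasanoPairAt (A a : ℂ) (q p s H : ℂ → ℂ) (t : ℂ) : Prop where
  deriv_q : t * deriv q t = 2 * q t * H t - q t ^ 2 + A * q t - t + 4 * t * s t
  deriv_p : t * deriv p t = -2 * p t * H t + 2 * q t * p t - A * p t + a

section SasanoPair

variable {A a c : ℂ} {q p s H : ℂ → ℂ}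

theorem hasPolarExpansionAt_of_sasanoPair {n l : ℂ}
    (hpair : ∀ᶠ t in 𝓝[≠] c, SasanoPairAt A a q p s H t) (hq : ContinuousAt q c)
    (hpole : meromorphicOrderAt p c < 0) (hlog : HasPolarExpansionAt (logDeriv p) c n l) :
    HasPolarExpansionAt H c (-(c * n) / 2) (q c - A / 2 - (c * l + n) / 2) := by
  have hp := tendsto_cobounded_of_meromorphicOrderAt_neg hpole
  have hinv : Tendsto (fun t => (p t)⁻¹) (𝓝[≠] c) (𝓝 0) := tendsto_inv₀_cobounded.comp hp
  have hq_lim : Tendsto q (𝓝[≠] c) (𝓝 (q c)) := hq.tendsto.mono_left inf_le_left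
  have hregular : HasPolarExpansionAt (fun t => q t - A / 2 + a / 2 * (p t)⁻¹) c 0
      (q c - A / 2 + a / 2 * 0) :=
    .of_tendsto ((hq_lim.sub_const _).add (hinv.const_mul _))
  have hsum := hregular.add (hlog.mul_left ((hasDerivAt_id' c).const_mul (-1 / 2 : ℂ)))
  have hH : HasPolarExpansionAt H c _ _ := hsum.congr <| by
    filter_upwards [hpair, hp.eventually_ne_cobounded 0] with t ht hpt
    rw [logDeriv_apply]
    field_simp
    linear_combination -ht.deriv_p
  convert hH using 1 <;> ring

theorem exists_hasPolarExpansionAt_of_sasanoPair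
    (hpair : ∀ᶠ t in 𝓝[≠] c, SasanoPairAt A a q p s H t) (hq : ContinuousAt q c)
    (hp : meromorphicOrderAt p c = -1) :
    ∃ b B, b ≠ 0 ∧ HasPolarExpansionAt p c b B ∧
      HasPolarExpansionAt H c (c / 2) (q c - A / 2 - (c * (B / b) - 1) / 2) := by
  obtain ⟨b, B, hb, hpB, hlog⟩ :=
    exists_hasPolarExpansionAt_of_meromorphicOrderAt_eq_neg_one hp
  have hH := hasPolarExpansionAt_of_sasanoPair hpair hq (by rw [hp]; decide) hlog
  rw [mul_neg_one, neg_neg, ← sub_eq_add_neg] at hH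
  exact ⟨b, B, hb, hpB, hH⟩

theorem hasPolarExpansionAt_four_mul_of_sasanoPair {ρ h : ℂ}
    (hpair : ∀ᶠ t in 𝓝[≠] c, SasanoPairAt A a q p s H t) (hq : AnalyticAt ℂ q c)
    (hH : HasPolarExpansionAt H c ρ h) :
    HasPolarExpansionAt (fun t => 4 * t * s t) c (-2 * q c * ρ)
      (c * deriv q c - 2 * q c * h - 2 * deriv q c * ρ + q c ^ 2 - A * q c + c) := by
  have hcont : ContinuousAt (fun t => t * deriv q t + q t ^ 2 - A * q t + t) c := by
    have := hq.continuousAt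
    have := hq.deriv.continuousAt
    fun_prop
  have hregular : HasPolarExpansionAt _ c 0 _ :=
    .of_tendsto (hcont.tendsto.mono_left inf_le_left)
  have hsum := hregular.add (hH.mul_left (hq.differentiableAt.hasDerivAt.const_mul (-2)))
  have hs : HasPolarExpansionAt (fun t => 4 * t * s t) c _ _ := hsum.congr <| by
    filter_upwards [hpair] with t ht
    linear_combination ht.deriv_q
  convert hs using 1 <;> ring

theorem meromorphicOrderAt_eq_neg_one_of_sasanoPair {ρ h : ℂ} (hc : c ≠ 0)
    (hpair : ∀ᶠ t in 𝓝[≠] c, SasanoPairAt A a q p s H t) (hq : AnalyticAt ℂ q c)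
    (hs : meromorphicOrderAt s c < 0) (hH : HasPolarExpansionAt H c ρ h) :
    meromorphicOrderAt s c = -1 := by
  have horder : meromorphicOrderAt (fun t => 4 * t * s t) c = meromorphicOrderAt s c :=
    meromorphicOrderAt_mul_of_ne_zero (by fun_prop) (mul_ne_zero (by norm_num) hc)
  rw [← horder] at hs ⊢
  exact (hasPolarExpansionAt_four_mul_of_sasanoPair hpair hq hH).meromorphicOrderAt_eq_neg_one hs

theorem expansion_coeffs_of_sasanoPair {h d D : ℂ} (hc : c ≠ 0)
    (hpair : ∀ᶠ t in 𝓝[≠] c, SasanoPairAt A a q p s H t) (hq : AnalyticAt ℂ q c)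
    (hH : HasPolarExpansionAt H c (c / 2) h) (hs : HasPolarExpansionAt s c d D) :
    q c = -4 * d ∧ 4 * (c * D + d) = -2 * q c * h + q c ^ 2 - A * q c + c := by
  obtain ⟨hres, hconst⟩ := (hasPolarExpansionAt_four_mul_of_sasanoPair hpair hq hH).unique
    (hs.mul_left ((hasDerivAt_id' c).const_mul 4))
  exact ⟨mul_left_cancel₀ hc (by linear_combination -hres), by linear_combination -hconst⟩

end SasanoPair

/-- Here `B` and `h` are the constant terms of `p1` and of `q1 * p1 + q2 * p2` at a common simple
pole `c` of `p1` and `p2`, whose residues there are `b` and `d`. -/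
theorem sasano_constant_terms_eq {A b d c h B : ℂ} (hc : c ≠ 0) (hb : b ≠ 0)
    (hbd : 16 * b * d + c = 0) (hh : h = -4 * d - A / 2 - (c * (B / b) - 1) / 2)
    (hB : 4 * (c * B + b) = -2 * (-4 * b) * h + (-4 * b) ^ 2 - A * (-4 * b) + c) :
    h = (1 - A) / 2 - b - d ∧ B = 3 / 8 + 2 * b ^ 2 / c := by
  field_simp at hh
  have h_eq : h = (1 - A) / 2 - b - d := by
    refine mul_left_cancel₀ (mul_ne_zero (by norm_num : (16 : ℂ) ≠ 0) hb) ?_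
    linear_combination 4 * hh - hB - hbd
  refine ⟨h_eq, ?_⟩
  rw [h_eq] at hh
  field_simp
  linear_combination 8 * hh - 3 * hbd

section SasanoSystem

variable {A a0 a1 c : ℂ} {q1 p1 q2 p2 : ℂ → ℂ}

theorem meromorphicOrderAt_eq_neg_one_of_sasano (hc : c ≠ 0)
    (hq1 : AnalyticAt ℂ q1 c) (hq2 : AnalyticAt ℂ q2 c)
    (hp1 : meromorphicOrderAt p1 c < 0) (hp2 : meromorphicOrderAt p2 c < 0)
    (hpair1 : ∀ᶠ t in 𝓝[≠] c, SasanoPairAt A a0 q1 p1 p2 (q1 * p1 + q2 * p2) t)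
    (hpair2 : ∀ᶠ t in 𝓝[≠] c, SasanoPairAt A a1 q2 p2 p1 (q1 * p1 + q2 * p2) t) :
    meromorphicOrderAt p1 c = -1 ∧ meromorphicOrderAt p2 c = -1 := by
  obtain ⟨n, hn⟩ := WithTop.ne_top_iff_exists.1 hp1.ne_top
  obtain ⟨l, hlog⟩ := exists_hasPolarExpansionAt_logDeriv
    (meromorphicAt_of_meromorphicOrderAt_ne_zero hp1.ne) hn.symm
  have hH := hasPolarExpansionAt_of_sasanoPair hpair1 hq1.continuousAt hp1 hlog
  exact ⟨meromorphicOrderAt_eq_neg_one_of_sasanoPair hc hpair2 hq2 hp1 hH,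
    meromorphicOrderAt_eq_neg_one_of_sasanoPair hc hpair1 hq1 hp2 hH⟩

theorem sasano_p1_p2_pole_at_c_general (hc : c ≠ 0)
    (hq1 : AnalyticAt ℂ q1 c) (hq2 : AnalyticAt ℂ q2 c)
    (hp1 : meromorphicOrderAt p1 c < 0) (hp2 : meromorphicOrderAt p2 c < 0)
    (hpair1 : ∀ᶠ t in 𝓝[≠] c, SasanoPairAt A a0 q1 p1 p2 (q1 * p1 + q2 * p2) t)
    (hpair2 : ∀ᶠ t in 𝓝[≠] c, SasanoPairAt A a1 q2 p2 p1 (q1 * p1 + q2 * p2) t) :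
    ∃ b d : ℂ, b ≠ 0 ∧ d ≠ 0 ∧
      Tendsto (fun t => (t - c) * p1 t) (𝓝[≠] c) (𝓝 b) ∧
      Tendsto (fun t => (t - c) * p2 t) (𝓝[≠] c) (𝓝 d) ∧
      16 * b * d + c = 0 ∧
      q1 c = -4 * d ∧
      q2 c = -4 * b ∧
      Tendsto (fun t => p1 t - b / (t - c)) (𝓝[≠] c) (𝓝 (3 / 8 + 2 * b ^ 2 / c)) ∧
      Tendsto (fun t => p2 t - d / (t - c)) (𝓝[≠] c) (𝓝 (3 / 8 + 2 * d ^ 2 / c)) ∧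
      deriv q1 c * b + deriv q2 c * d + A / 2 = 1 / 2 := by
  obtain ⟨hord1, hord2⟩ :=
    meromorphicOrderAt_eq_neg_one_of_sasano hc hq1 hq2 hp1 hp2 hpair1 hpair2
  obtain ⟨b, B, hb, hp1B, hH1⟩ :=
    exists_hasPolarExpansionAt_of_sasanoPair hpair1 hq1.continuousAt hord1
  obtain ⟨d, D, hd, hp2D, hH2⟩ :=
    exists_hasPolarExpansionAt_of_sasanoPair hpair2 hq2.continuousAt hord2
  have hH := (hp1B.mul_left hq1.differentiableAt.hasDerivAt).add
    (hp2D.mul_left hq2.differentiableAt.hasDerivAt)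
  obtain ⟨hq1c, hD⟩ := expansion_coeffs_of_sasanoPair hc hpair1 hq1 hH1 hp2D
  obtain ⟨hq2c, hB⟩ := expansion_coeffs_of_sasanoPair hc hpair2 hq2 hH1 hp1B
  obtain ⟨hres, hconst⟩ := hH.unique hH1
  obtain ⟨-, hconst12⟩ := hH1.unique hH2
  rw [hq1c] at hB hD hres hconst hconst12
  rw [hq2c] at hB hres hconst hconst12
  have hbd : 16 * b * d + c = 0 := by linear_combination -2 * hres
  obtain ⟨hh, rfl⟩ := sasano_constant_terms_eq hc hb hbd rfl hB
  obtain ⟨-, rfl⟩ := sasano_constant_terms_eq hc hd (by linear_combination hbd) hconst12 hD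
  refine ⟨b, d, hb, hd, hp1B.tendsto_sub_mul, hp2D.tendsto_sub_mul, hbd, hq1c, hq2c, hp1B, hp2D, ?_⟩
  have hcross : d * (3 / 8 + 2 * b ^ 2 / c) + b * (3 / 8 + 2 * d ^ 2 / c) = (b + d) / 4 := by
    field_simp
    linear_combination 4 * (b + d) * hbd
  linear_combination hconst + hh + 4 * hcross

end SasanoSystem

section RationalFunction

variable {f : RatFunc ℂ} {c : ℂ}

theorem NoPoleAt.analyticAt_evR (hf : NoPoleAt f c) : AnalyticAt ℂ (evR f) c :=
  (AnalyticOnNhd.eval_polynomial f.num c trivial).div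
    (AnalyticOnNhd.eval_polynomial f.denom c trivial) hf

theorem eventually_noPoleAt (f : RatFunc ℂ) (c : ℂ) : ∀ᶠ t in 𝓝[≠] c, NoPoleAt f t :=
  nhdsNE_le_cofinite c (Polynomial.finite_setOfPred_isRoot f.denom_ne_zero).compl_mem_cofinite

theorem meromorphicOrderAt_evR_neg (hf : ¬ NoPoleAt f c) : meromorphicOrderAt (evR f) c < 0 := by
  have hdenom : f.denom.eval c = 0 := not_not.1 hf
  have hnum : f.num.eval c ≠ 0 := fun hnum => by
    obtain ⟨u, v, huv⟩ := f.isCoprime_num_denom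
    simpa [hnum, hdenom] using congrArg (Polynomial.eval c) huv
  have hdenom_an : AnalyticAt ℂ (fun t => f.denom.eval t) c :=
    AnalyticOnNhd.eval_polynomial f.denom c trivial
  have hdenom_lim : Tendsto (fun t => f.denom.eval t) (𝓝[≠] c) (𝓝[≠] 0) :=
    tendsto_nhdsWithin_iff.2
      ⟨hdenom ▸ hdenom_an.continuousAt.tendsto.mono_left inf_le_left, eventually_noPoleAt f c⟩
  have hinv : meromorphicOrderAt (fun t => f.denom.eval t)⁻¹ c < 0 :=
    (tendsto_cobounded_iff_meromorphicOrderAt_neg hdenom_an.meromorphicAt.inv).1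
      (tendsto_inv₀_nhdsNE_zero.comp hdenom_lim)
  rwa [← meromorphicOrderAt_mul_of_ne_zero
    (AnalyticOnNhd.eval_polynomial f.num c trivial) hnum] at hinv

end RationalFunction

theorem IsSasanoSol.eventually_sasanoPairAt {a0 a1 a3 : ℂ} {q1 p1 q2 p2 : RatFunc ℂ}
    (hsol : IsSasanoSol a0 a1 a3 q1 p1 q2 p2) (c : ℂ) :
    ∀ᶠ t in 𝓝[≠] c,
      SasanoPairAt (a0 + a1 + a3) a0 (evR q1) (evR p1) (evR p2)
        (evR q1 * evR p1 + evR q2 * evR p2) t ∧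
      SasanoPairAt (a0 + a1 + a3) a1 (evR q2) (evR p2) (evR p1)
        (evR q1 * evR p1 + evR q2 * evR p2) t := by
  filter_upwards [eventually_noPoleAt q1 c, eventually_noPoleAt p1 c, eventually_noPoleAt q2 c,
    eventually_noPoleAt p2 c] with t hq1 hp1 hq2 hp2
  obtain ⟨eq_q1, eq_p1, eq_q2, eq_p2⟩ := hsol t hq1 hp1 hq2 hp2
  refine ⟨⟨?_, ?_⟩, ⟨?_, ?_⟩⟩ <;> simp only [Pi.add_apply, Pi.mul_apply]
  · linear_combination eq_q1
  · linear_combination eq_p1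
  · linear_combination eq_q2
  · linear_combination eq_p2

theorem sasano_p1_p2_pole_at_c (a0 a1 a2 a3 : ℂ)
    (hpar : a0 + a1 + 2 * a2 + a3 = 1 / 2)
    (c : ℂ) (hc : c ≠ 0)
    (q1 p1 q2 p2 : RatFunc ℂ)
    (hsol : IsSasanoSol a0 a1 a3 q1 p1 q2 p2)
    (hp1 : ¬ NoPoleAt p1 c) (hp2 : ¬ NoPoleAt p2 c)
    (hq1 : NoPoleAt q1 c) (hq2 : NoPoleAt q2 c) :
    ∃ b d : ℂ, b ≠ 0 ∧ d ≠ 0 ∧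
      Tendsto (fun t => (t - c) * evR p1 t) (𝓝[≠] c) (𝓝 b) ∧
      Tendsto (fun t => (t - c) * evR p2 t) (𝓝[≠] c) (𝓝 d) ∧
      16 * b * d + c = 0 ∧
      evR q1 c = -4 * d ∧
      evR q2 c = -4 * b ∧
      Tendsto (fun t => evR p1 t - b / (t - c)) (𝓝[≠] c) (𝓝 (3 / 8 + 2 * b ^ 2 / c)) ∧
      Tendsto (fun t => evR p2 t - d / (t - c)) (𝓝[≠] c) (𝓝 (3 / 8 + 2 * d ^ 2 / c)) ∧
      deriv (evR q1) c * b + deriv (evR q2) c * d + (a0 + a1 + a3) / 2 = 1 / 2 :=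
  sasano_p1_p2_pole_at_c_general hc hq1.analyticAt_evR hq2.analyticAt_evR
    (meromorphicOrderAt_evR_neg hp1) (meromorphicOrderAt_evR_neg hp2)
    ((hsol.eventually_sasanoPairAt c).mono fun _ h => h.1)
    ((hsol.eventually_sasanoPairAt c).mono fun _ h => h.2)
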